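/- arXiv:1504.01941 — 2 statements merged into one kernel-verified Lean document; each statement's English description precedes it below -/
import Mathlib

section
/- For every k with 1 ≤ k ≤ n-1, the following matrix identity holds: (∑_{m=k}^{n} M_q(t_{m,k})) · (I − M_q(t_{n,k}))·(I − M_q(t_{n-1,k}))⋯(I − M_q(t_{k+1,k})) = (I − D_k·M_q(t_{n,k+1}))·(I − D_k·M_q(t_{n-1,k+1}))⋯(I − D_k·M_q(t_{k+2,k+1}))·(I − D_k), where on each side the factors are multiplied in the displayed order. (This is the matrix form of the factorization β*_{n-k+1}·γ*_{n-k+1} = δ*_{n-k+1} in the twisted group algebra A(S_n).) -/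
/-- The square complex matrices indexed by the symmetric group `Equiv.Perm (Fin n)`. -/
abbrev PermMatrix (n : ℕ) := Matrix (Equiv.Perm (Fin n)) (Equiv.Perm (Fin n)) ℂ

/-- The set of inversions `I(g) = {(a,b) : a < b and g(a) > g(b)}` of a permutation. -/
def invSet {n : ℕ} (g : Equiv.Perm (Fin n)) : Finset (Fin n × Fin n) :=
  Finset.univ.filter fun p => p.1 < p.2 ∧ g p.2 < g p.1

/-- The matrix `M_q(g)`, with `(σ,τ)`-entry `∏_{(a,b) ∈ I(g)} q (τ b) (τ a)`
if `σ = τ ∘ g⁻¹` and `0` otherwise. -/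
def twistMat (n : ℕ) (q : Fin n → Fin n → ℂ) (g : Equiv.Perm (Fin n)) : PermMatrix n :=
  fun σ τ => if σ = τ * g⁻¹ then ∏ p ∈ invSet g, q (τ p.2) (τ p.1) else 0

/-- `IsTCycle a b s` says that `s` is the cycle `t_{b,a}` (for `a ≤ b`):
`s i = i + 1` for `a ≤ i ≤ b - 1`, `s b = a`, and `s i = i` otherwise
(in particular `t_{b,b} = id`). -/
def IsTCycle {n : ℕ} (a b : Fin n) (s : Equiv.Perm (Fin n)) : Prop :=
  (∀ i : Fin n, a ≤ i → i < b → (s i : ℕ) = (i : ℕ) + 1) ∧ s b = a ∧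
    ∀ i : Fin n, ¬(a ≤ i ∧ i ≤ b) → s i = i

/-- The successor `a + 1` in `Fin n` (computed mod `n`; in all uses below one has
`a + 1 < n`, so no wraparound occurs). -/
def finSucc {n : ℕ} (a : Fin n) : Fin n :=
  ⟨((a : ℕ) + 1) % n, Nat.mod_lt _ a.pos⟩

/-- The diagonal matrix `D_a = M_q(t_{a+1,a})²` whose diagonal entry at `τ` is
`q (τ a) (τ (a+1)) · q (τ (a+1)) (τ a)`. -/
def Dmat (n : ℕ) (q : Fin n → Fin n → ℂ) (a : Fin n) : PermMatrix n :=
  Matrix.diagonal fun τ => q (τ a) (τ (finSucc a)) * q (τ (finSucc a)) (τ a)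

/-- Weight of `g` at `τ`. -/
def bgdW {n : ℕ} (q : Fin n → Fin n → ℂ) (g τ : Equiv.Perm (Fin n)) : ℂ :=
  ∏ p ∈ invSet g, q (τ p.2) (τ p.1)

theorem bgd_val {n : ℕ} {a b : Fin n} {s : Equiv.Perm (Fin n)} (hab : a ≤ b)
    (h : IsTCycle a b s) (i : Fin n) :
    ((s i : Fin n) : ℕ) = if (a : ℕ) ≤ i ∧ (i : ℕ) < b then (i : ℕ) + 1
      else if (i : ℕ) = b then (a : ℕ) else i := by
  obtain ⟨h1, h2, h3⟩ := h
  split_ifs with c1 c2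
  · exact h1 i c1.1 c1.2
  · rw [Fin.ext c2, h2]
  · rw [h3 i]
    rintro ⟨c3, c4⟩
    rw [Fin.le_def] at c3 c4
    omega

theorem bgd_weight {n : ℕ} (q : Fin n → Fin n → ℂ) {a b : Fin n} {s : Equiv.Perm (Fin n)}
    (hab : a ≤ b) (h : IsTCycle a b s) (τ : Equiv.Perm (Fin n)) :
    bgdW q s τ = ∏ x ∈ Finset.Ico a b, q (τ b) (τ x) := by
  have hs : invSet s = (Finset.Ico a b).map ⟨fun x => (x, b), fun x y hxy => by simpa using hxy⟩ := by
    ext ⟨x, y⟩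
    simp only [invSet, Finset.mem_filter, Finset.mem_univ, true_and, Finset.mem_map,
      Finset.mem_Ico, Function.Embedding.coeFn_mk, Prod.mk.injEq]
    have hx := bgd_val hab h x
    have hy := bgd_val hab h y
    rw [Fin.le_def] at hab
    constructor
    · rintro ⟨h1, h2⟩
      rw [Fin.lt_def] at h1 h2
      refine ⟨x, ?_, Prod.ext rfl (Eq.symm ?_)⟩
      · rw [Fin.le_def, Fin.lt_def]
        split_ifs at hx hy <;> omega
      · apply Fin.ext
        change (y : ℕ) = b
        split_ifs at hx hy <;> omega
    · rintro ⟨z, ⟨h1, h2⟩, ⟨⟩⟩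
      rw [Fin.le_def] at h1
      rw [Fin.lt_def] at h2
      rw [Fin.lt_def, Fin.lt_def]
      split_ifs at hx hy <;> omega
  rw [bgdW, hs, Finset.prod_map]
  rfl

theorem bgd_mul {n : ℕ} (q : Fin n → Fin n → ℂ) (g h σ τ : Equiv.Perm (Fin n)) :
    (twistMat n q g * twistMat n q h) σ τ =
      if σ = τ * (g * h)⁻¹ then bgdW q h τ * bgdW q g (τ * h⁻¹) else 0 := by
  rw [Matrix.mul_apply, Finset.sum_eq_single (τ * h⁻¹)]
  · simp only [twistMat, bgdW, if_true, mul_inv_rev, mul_assoc]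
    split_ifs <;> ring
  · intro ρ _ hρ
    simp [twistMat, hρ]
  · simp

theorem bgd_key {n : ℕ} (q : Fin n → Fin n → ℂ) (t : Fin n → Fin n → Equiv.Perm (Fin n))
    (ht : ∀ a b : Fin n, a ≤ b → IsTCycle a b (t b a))
    (k k' p m j : Fin n) (hk' : (k' : ℕ) = k + 1) (hf : finSucc k = k')
    (hm : (m : ℕ) = p + 1) (hkp : k ≤ p) (hpj : p < j) :
    twistMat n q (t m k) * twistMat n q (t j k) =
      Dmat n q k * twistMat n q (t j k') * twistMat n q (t p k) := by
  rw [Fin.le_def] at hkp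
  rw [Fin.lt_def] at hpj
  have ekm : k ≤ m := by rw [Fin.le_def]; omega
  have ekj : k ≤ j := by rw [Fin.le_def]; omega
  have ekj' : k' ≤ j := by rw [Fin.le_def]; omega
  have ekp : k ≤ p := by rw [Fin.le_def]; omega
  have hM := bgd_val ekm (ht _ _ ekm)
  have hJ := bgd_val ekj (ht _ _ ekj)
  have hS := bgd_val ekj' (ht _ _ ekj')
  have hP := bgd_val ekp (ht _ _ ekp)
  have hgrp : t m k * t j k = t j k' * t p k := by
    ext i
    rw [Equiv.Perm.mul_apply, Equiv.Perm.mul_apply]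
    have h1 := hM (t j k i)
    have h2 := hJ i
    have h3 := hS (t p k i)
    have h4 := hP i
    rw [h1, h3, h2, h4]
    split_ifs <;> omega
  ext σ τ
  rw [mul_assoc, Dmat, Matrix.diagonal_mul, bgd_mul, bgd_mul, hgrp]
  split_ifs with hσ
  swap
  · simp
  rw [bgd_weight q ekm (ht _ _ ekm), bgd_weight q ekj (ht _ _ ekj),
    bgd_weight q ekj' (ht _ _ ekj'), bgd_weight q ekp (ht _ _ ekp)]
  have a1 : (t j k)⁻¹ m = p := by
    rw [Equiv.Perm.inv_eq_iff_eq]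
    apply Fin.ext
    rw [hJ p]
    split_ifs <;> omega
  have a2 : (t p k)⁻¹ j = j := by
    rw [Equiv.Perm.inv_eq_iff_eq]
    apply Fin.ext
    rw [hP j]
    split_ifs <;> omega
  have a3 : (t j k' * t p k)⁻¹ k = p := by
    rw [Equiv.Perm.inv_eq_iff_eq, Equiv.Perm.mul_apply]
    apply Fin.ext
    rw [hS, hP]
    split_ifs <;> omega
  have a4 : (t j k' * t p k)⁻¹ k' = j := by
    rw [Equiv.Perm.inv_eq_iff_eq, Equiv.Perm.mul_apply]
    apply Fin.ext
    rw [hS, hP]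
    split_ifs <;> omega
  have s1 : Finset.Ico k m = (insert j (Finset.Ico k p)).map (t j k).toEmbedding := by
    ext x
    obtain ⟨y, rfl⟩ := (t j k).surjective x
    rw [Finset.mem_map_equiv, Equiv.symm_apply_apply, Finset.mem_insert, Finset.mem_Ico,
      Finset.mem_Ico, Fin.le_def, Fin.lt_def, Fin.le_def, Fin.lt_def, Fin.ext_iff, hJ y]
    split_ifs <;> omega
  have s2 : Finset.Ico k' j = ((Finset.Ico k j).erase p).map (t p k).toEmbedding := by
    ext x
    obtain ⟨y, rfl⟩ := (t p k).surjective x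
    rw [Finset.mem_map_equiv, Equiv.symm_apply_apply, Finset.mem_erase, Finset.mem_Ico,
      Finset.mem_Ico, Fin.le_def, Fin.lt_def, Fin.le_def, Fin.lt_def, Ne, Fin.ext_iff, hP y]
    split_ifs <;> omega
  have hj : j ∉ Finset.Ico k p := by
    rw [Finset.mem_Ico, Fin.le_def, Fin.lt_def]; omega
  have hp : p ∈ Finset.Ico k j := by
    rw [Finset.mem_Ico, Fin.le_def, Fin.lt_def]; omega
  rw [s1, s2, Finset.prod_map, Finset.prod_map, Finset.prod_insert hj, hf, hσ]
  have hinv : ∀ (g : Equiv.Perm (Fin n)) x, g⁻¹ (g x) = x := fun g x => g.symm_apply_apply x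
  rw [Equiv.Perm.mul_apply τ _ k, Equiv.Perm.mul_apply τ _ k', a3, a4]
  simp only [Equiv.Perm.mul_apply, a1, a2, Equiv.coe_toEmbedding, hinv]
  rw [← Finset.mul_prod_erase _ _ hp]
  ring

theorem bgd_abs {R : Type*} [Ring R] (T S : ℕ → R) (D : R) (k : ℕ) (N : ℕ) (hN : k + 2 ≤ N)
    (h0 : T k = 1) (hS : S (k + 1) = 1)
    (key : ∀ p j, k ≤ p → p < j → j < N → T (p + 1) * T j = D * S j * T p) :
    (∑ m ∈ Finset.Ico k N, T m) *
        (((List.range N).filter fun m => decide (k < m)).reverse.map fun m => 1 - T m).prod =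
      (((List.range N).filter fun m => decide (k + 1 < m)).reverse.map
        fun m => 1 - D * S m).prod * (1 - D) := by
  have step : ∀ j, k < j → j < N →
      (∑ m ∈ Finset.Ico k (j + 1), T m) * (1 - T j) =
        (1 - D * S j) * ∑ m ∈ Finset.Ico k j, T m := by
    intro j hj hjN
    have h1 : (∑ m ∈ Finset.Ico k (j + 1), T m) = T k + ∑ m ∈ Finset.Ico k j, T (m + 1) := by
      rw [Finset.sum_eq_sum_Ico_succ_bot (by omega), Finset.sum_Ico_add' T k j 1]
    have h2 : (∑ m ∈ Finset.Ico k j, T (m + 1)) * T j = D * S j * ∑ m ∈ Finset.Ico k j, T m := by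
      rw [Finset.sum_mul, Finset.mul_sum]
      refine Finset.sum_congr rfl fun p hp => ?_
      rw [Finset.mem_Ico] at hp
      exact key p j hp.1 hp.2 hjN
    rw [mul_sub, mul_one]
    conv_lhs => rw [Finset.sum_Ico_succ_top (by omega)]
    rw [← Finset.sum_Ico_succ_top (by omega)]
    have h3 : (∑ m ∈ Finset.Ico k (j + 1), T m) * T j
        = T j + D * S j * ∑ m ∈ Finset.Ico k j, T m := by
      rw [h1, add_mul, h2, h0, one_mul]
    rw [h3, Finset.sum_Ico_succ_top (by omega), sub_mul, one_mul]
    abel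
  have base : ∀ c, ((List.range (c + 1)).filter fun m => decide (c < m)) = [] := by
    intro c
    rw [List.filter_eq_nil_iff]
    intro a ha
    rw [List.mem_range] at ha
    simp
    omega
  have main : ∀ M, k + 2 ≤ M → M ≤ N → (∑ m ∈ Finset.Ico k M, T m) *
        (((List.range M).filter fun m => decide (k < m)).reverse.map fun m => 1 - T m).prod =
      (((List.range M).filter fun m => decide (k + 1 < m)).reverse.map
        fun m => 1 - D * S m).prod * (1 - D) := by
    intro M hM
    induction M, hM using Nat.le_induction with
    | base =>
      intro hle
      rw [base (k + 1), List.range_succ, List.filter_append, base k]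
      have := step (k + 1) (by omega) (by omega)
      simpa [hS, h0] using this
    | succ M hM ih =>
      intro hle
      have e1 : k < M := by omega
      have e2 : k + 1 < M := by omega
      rw [List.range_succ, List.filter_append, List.filter_append]
      simp only [List.filter_cons, List.filter_nil, e1, e2, decide_true, if_true,
        List.reverse_append, List.map_append, List.prod_append, List.reverse_singleton,
        List.map_singleton, List.prod_singleton]
      rw [← mul_assoc, step M e1 (by omega), mul_assoc, ih (by omega), mul_assoc]
  exact main N hN le_rfl

theorem bgd_list {R : Type*} [Ring R] {n : ℕ} (c : Fin n) (F : Fin n → R) (F' : ℕ → R)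
    (h : ∀ m : Fin n, F m = F' m) :
    ((List.finRange n).filter fun m => decide (c < m)).reverse.map F =
      ((List.range n).filter fun m => decide ((c : ℕ) < m)).reverse.map F' := by
  have hF : F = F' ∘ Fin.val := funext h
  rw [← List.map_coe_finRange_eq_range, List.filter_map, ← List.map_reverse, List.map_map, hF]
  rfl

theorem bgd_one {n : ℕ} (q : Fin n → Fin n → ℂ) {a : Fin n} {s : Equiv.Perm (Fin n)}
    (h : IsTCycle a a s) : twistMat n q s = 1 := by
  have hs : s = 1 := by
    ext i
    rw [bgd_val le_rfl h i, Equiv.Perm.one_apply]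
    split_ifs <;> omega
  subst hs
  ext σ τ
  have : invSet (1 : Equiv.Perm (Fin n)) = ∅ := by
    rw [invSet, Finset.filter_eq_empty_iff]
    rintro ⟨x, y⟩ _ ⟨h1, h2⟩
    exact lt_asymm h1 h2
  simp [twistMat, this, Matrix.one_apply]

/-- The matrix form of the factorization `β*_{n-k+1} · γ*_{n-k+1} = δ*_{n-k+1}` in the
twisted group algebra `A(S_n)`: for `1 ≤ k ≤ n-1`,
`(∑_{m=k}^{n} M_q(t_{m,k})) · (I − M_q(t_{n,k})) ⋯ (I − M_q(t_{k+1,k}))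
 = (I − D_k·M_q(t_{n,k+1})) ⋯ (I − D_k·M_q(t_{k+2,k+1})) · (I − D_k)`,
the factors being multiplied in the displayed (decreasing) order. -/
theorem beta_gamma_delta_factorization (n : ℕ) (hn : 1 ≤ n) (q : Fin n → Fin n → ℂ)
    (t : Fin n → Fin n → Equiv.Perm (Fin n))
    (ht : ∀ a b : Fin n, a ≤ b → IsTCycle a b (t b a))
    (k : Fin n) (hk : (k : ℕ) + 1 < n) :
    (∑ m ∈ Finset.Ici k, twistMat n q (t m k)) *
        (((List.finRange n).filter fun m => decide (k < m)).reverse.map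
          fun m => (1 : PermMatrix n) - twistMat n q (t m k)).prod =
      ((((List.finRange n).filter fun m => decide (finSucc k < m)).reverse.map
          fun m => (1 : PermMatrix n) - Dmat n q k * twistMat n q (t m (finSucc k))).prod) *
        ((1 : PermMatrix n) - Dmat n q k) := by
  obtain ⟨k', hk'⟩ : ∃ k' : Fin n, (k' : ℕ) = k + 1 := ⟨⟨k + 1, hk⟩, rfl⟩
  have hf : finSucc k = k' := by
    apply Fin.ext
    rw [hk', finSucc]
    exact Nat.mod_eq_of_lt hk
  rw [hf]
  let T : ℕ → PermMatrix n := fun i => if h : i < n then twistMat n q (t ⟨i, h⟩ k) else 0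
  let S : ℕ → PermMatrix n := fun i => if h : i < n then twistMat n q (t ⟨i, h⟩ k') else 0
  have hT : ∀ m : Fin n, twistMat n q (t m k) = T m := fun m => by simp [T]
  have hS : ∀ m : Fin n, twistMat n q (t m k') = S m := fun m => by simp [S]
  rw [bgd_list k _ (fun i => 1 - T i) (fun m => by rw [hT]),
    bgd_list k' _ (fun i => 1 - Dmat n q k * S i) (fun m => by rw [hS]), hk']
  have hsum : ∑ m ∈ Finset.Ici k, twistMat n q (t m k) = ∑ m ∈ Finset.Ico (k : ℕ) n, T m := by
    refine Finset.sum_bij (fun m _ => (m : ℕ)) ?_ ?_ ?_ ?_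
    · intro a ha
      rw [Finset.mem_Ici, Fin.le_def] at ha
      exact Finset.mem_Ico.2 ⟨ha, a.2⟩
    · intro a _ b _ hab
      exact Fin.ext hab
    · intro b hb
      rw [Finset.mem_Ico] at hb
      exact ⟨⟨b, hb.2⟩, Finset.mem_Ici.2 hb.1, rfl⟩
    · intro a _
      exact hT a
  rw [hsum]
  apply bgd_abs T S (Dmat n q k) k n (by omega)
  · rw [← hT k]
    exact bgd_one q (ht k k le_rfl)
  · rw [← hk', ← hS k']
    exact bgd_one q (ht k' k' le_rfl)
  · intro p j hkp hpj hjn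
    have := bgd_key q t ht k k' ⟨p, by omega⟩ ⟨p + 1, by omega⟩ ⟨j, hjn⟩ hk' hf rfl hkp hpj
    rw [hT, hT, hT, hS] at this
    exact this
end

section
/- For every k with 1 ≤ k ≤ n−1, the determinant of the ordered product D_{Q,n−k+1} := (I − D_k·M_q(t_{n,k+1}))·(I − D_k·M_q(t_{n−1,k+1}))⋯(I − D_k·M_q(t_{k+2,k+1}))·(I − D_k) factors as det D_{Q,n−k+1} = ∏_{m=2}^{n−k+1} ∏_{T} (1 − σ_T)^{(m−2)!·m·(n−m)!}, where the inner product runs over all subsets T ⊆ Fin n of cardinality m. -/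
/-- `σ_T = ∏_{i,j ∈ T, i ≠ j} q i j`, the product over all ordered pairs of distinct
elements of `T`. -/
def sigmaT {n : ℕ} (q : Fin n → Fin n → ℂ) (T : Finset (Fin n)) : ℂ :=
  ∏ p ∈ (T ×ˢ T).filter fun p => p.1 ≠ p.2, q p.1 p.2

open Finset in
theorem det_of_tri {X : Type*} [Fintype X] [DecidableEq X] (M : Matrix X X ℂ) (b : X → ℕ)
    (h : ∀ i j, i ≠ j → M i j ≠ 0 → b i < b j) : M.det = ∏ i, M i i := by
  have hb : M.BlockTriangular b := by
    intro i j hij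
    by_contra h0
    have hne : i ≠ j := by rintro rfl; exact lt_irrefl _ hij
    have := h i j hne h0
    omega
  rw [hb.det]
  rw [← Finset.prod_fiberwise_of_maps_to (s := Finset.univ) (t := Finset.univ.image b) (g := b)
    (fun i hi => Finset.mem_image_of_mem b hi)]
  refine Finset.prod_congr rfl fun a _ => ?_
  have : M.toSquareBlock b a = Matrix.diagonal (fun i => M i.1 i.1) := by
    ext i j
    by_cases hij : i = j
    · subst hij; simp [Matrix.toSquareBlock_def]
    · rw [Matrix.diagonal_apply_ne _ hij]
      by_contra h0
      have := h i.1 j.1 (fun e => hij (Subtype.ext e)) h0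
      have h1 := i.2
      have h2 := j.2
      omega
  rw [this, Matrix.det_diagonal]
  exact (Finset.prod_subtype (Finset.univ.filter fun i => b i = a) (by simp) (fun i => M i i)).symm

theorem det_one_sub_mono {X : Type*} [Fintype X] [DecidableEq X] (φ : Equiv.Perm X) (w : X → ℂ)
    (r : ℕ) (hφ : φ ^ r = 1) (c : X → ℕ) (hc : ∀ x, c x < r)
    (hcφ : ∀ x, c (φ x) = if c x + 1 = r then 0 else c x + 1) (A : Matrix X X ℂ)
    (hA : ∀ σ τ, A σ τ = if σ = φ τ then w τ else 0) :
    (1 - A).det = ∏ τ ∈ Finset.univ.filter (fun τ => c τ = 0),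
      (1 - ∏ j ∈ Finset.range r, w ((φ ^ j) τ)) := by
  classical
  set U : Matrix X X ℂ := fun σ τ => if c τ = 0 then
    (if σ = (φ ^ (c σ)) τ then ∏ j ∈ Finset.range (c σ), w ((φ ^ j) τ) else 0)
    else if σ = τ then 1 else 0 with hU
  have hUdet : U.det = 1 := by
    rw [det_of_tri U (fun x => r - c x)]
    · refine Finset.prod_eq_one fun τ _ => ?_
      simp only [hU]
      by_cases h : c τ = 0
      · simp [h]
      · simp [h]
    · intro σ τ hne h0
      simp only [hU] at h0
      have h1 := hc σ
      by_cases h : c τ = 0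
      · rw [if_pos h] at h0
        by_cases h2 : c σ = 0
        · simp [h2, hne] at h0
        · omega
      · simp [h, hne] at h0
  have hAU : ∀ ρ τ, (A * U) (φ ρ) τ = w ρ * U ρ τ := by
    intro ρ τ
    rw [Matrix.mul_apply, Finset.sum_eq_single ρ]
    · rw [hA]; simp
    · intro x _ hx
      rw [hA, if_neg, zero_mul]
      exact fun h => hx (φ.injective h).symm
    · simp
  have hV0 : ∀ σ τ, c τ = 0 → ((1 - A) * U) σ τ =
      if σ = τ then 1 - ∏ j ∈ Finset.range r, w ((φ ^ j) τ) else 0 := by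
    intro σ τ h
    obtain ⟨ρ, rfl⟩ := φ.surjective σ
    rw [sub_mul, one_mul, Matrix.sub_apply, hAU]
    simp only [hU, h, if_true]
    have h1 := hcφ ρ
    by_cases h2 : c ρ + 1 = r
    · rw [if_pos h2] at h1
      have e : (φ ρ = τ) ↔ (ρ = (φ ^ (c ρ)) τ) := by
        rw [← φ.injective.eq_iff (a := ρ), ← Equiv.Perm.mul_apply, ← pow_succ', h2, hφ]; rfl
      rw [h1]
      by_cases h3 : φ ρ = τ
      · have h4 := e.1 h3
        rw [if_pos h4, if_pos h3, ← h2, Finset.prod_range_succ, ← h4]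
        simp [h3, mul_comm]
      · have h4 := fun z => h3 (e.2 z)
        rw [if_neg h4]
        simp [h3]
    · rw [if_neg h2] at h1
      have h3 : φ ρ ≠ τ := by rintro rfl; omega
      rw [h1, if_neg h3]
      have e : (φ ρ = (φ ^ (c ρ + 1)) τ) ↔ (ρ = (φ ^ (c ρ)) τ) := by
        rw [pow_succ', Equiv.Perm.mul_apply, φ.injective.eq_iff]
      by_cases h4 : ρ = (φ ^ (c ρ)) τ
      · rw [if_pos (e.2 h4), if_pos h4, Finset.prod_range_succ, ← h4]; ring
      · rw [if_neg (fun z => h4 (e.1 z)), if_neg h4]; ring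
  have hV1 : ∀ σ τ, c τ ≠ 0 → ((1 - A) * U) σ τ =
      (if σ = τ then 1 else 0) - (if σ = φ τ then w τ else 0) := by
    intro σ τ h
    obtain ⟨ρ, rfl⟩ := φ.surjective σ
    rw [sub_mul, one_mul, Matrix.sub_apply, hAU]
    simp only [hU, h, if_false, φ.injective.eq_iff]
    congr 1
    by_cases h3 : ρ = τ <;> simp [h3]
  have hVdet := det_of_tri ((1 - A) * U) (fun x => if c x = 0 then 0 else r - c x) (by
    intro σ τ hne h0
    by_cases h : c τ = 0
    · rw [hV0 _ _ h, if_neg hne] at h0; exact absurd rfl h0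
    · rw [hV1 _ _ h, if_neg hne] at h0
      have h1 : σ = φ τ := by
        by_contra h1
        simp [h1] at h0
      have h2 := hcφ τ
      have h3 := hc τ
      rw [← h1] at h2
      simp only [h, if_false]
      split_ifs at h2 ⊢ <;> omega)
  rw [Matrix.det_mul, hUdet, mul_one] at hVdet
  rw [hVdet, Finset.prod_filter]
  refine Finset.prod_congr rfl fun τ _ => ?_
  by_cases h : c τ = 0
  · rw [hV0 _ _ h]; simp [h]
  · rw [hV1 _ _ h]
    have h1 : τ ≠ φ τ := by
      intro h1
      have h2 := hcφ τ
      rw [← h1] at h2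
      split_ifs at h2 <;> omega
    simp [h, h1]

theorem card_level {X : Type*} [Fintype X] [DecidableEq X] (φ : Equiv.Perm X)
    (r : ℕ) (c : X → ℕ) (hc : ∀ x, c x < r)
    (hcφ : ∀ x, c (φ x) = if c x + 1 = r then 0 else c x + 1)
    (P : X → Prop) [DecidablePred P] (hP : ∀ x, P (φ x) ↔ P x) :
    r * (Finset.univ.filter fun x => P x ∧ c x = 0).card = (Finset.univ.filter P).card := by
  have h1 : ∀ j, j < r → (Finset.univ.filter fun x => P x ∧ c x = j).card =
      (Finset.univ.filter fun x => P x ∧ c x = 0).card := by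
    intro j
    induction j with
    | zero => intro _; rfl
    | succ j ih =>
      intro hj
      rw [← ih (by omega)]
      symm
      refine Finset.card_equiv φ fun x => ?_
      simp only [Finset.mem_filter, Finset.mem_univ, true_and, hP]
      have := hcφ x
      have h2 : c (φ x) = j + 1 ↔ c x = j := by
        have h3 := hc x
        rw [this]
        by_cases h4 : c x + 1 = r
        · rw [if_pos h4]; omega
        · rw [if_neg h4]; omega
      rw [h2]
  rw [Finset.card_eq_sum_card_fiberwise (s := Finset.univ.filter P) (f := c) (t := Finset.range r)
    (fun x _ => by simpa using hc x)]
  simp only [Finset.filter_filter]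
  rw [Finset.sum_congr rfl (fun j hj => h1 j (Finset.mem_range.1 hj))]
  simp

theorem card_image_eq {n : ℕ} (S T : Finset (Fin n)) (h : T.card = S.card) :
    (Finset.univ.filter fun τ : Equiv.Perm (Fin n) => S.image τ = T).card =
      S.card.factorial * (n - S.card).factorial := by
  have h1 : ∀ T' : Finset (Fin n), T'.card = S.card →
      (Finset.univ.filter fun τ : Equiv.Perm (Fin n) => S.image τ = T').card =
      (Finset.univ.filter fun τ : Equiv.Perm (Fin n) => S.image τ = T).card := by
    intro T' h'
    let e : {x // x ∈ T'} ≃ {x // x ∈ T} := Finset.equivOfCardEq (h'.trans h.symm)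
    let ρ : Equiv.Perm (Fin n) := e.extendSubtype
    have hρ : T'.image ρ = T := by
      apply Finset.eq_of_subset_of_card_le
      · intro x hx
        obtain ⟨y, hy, rfl⟩ := Finset.mem_image.1 hx
        exact e.extendSubtype_mem y hy
      · rw [Finset.card_image_of_injective _ ρ.injective, h, h']
    refine Finset.card_equiv (Equiv.mulLeft ρ) fun τ => ?_
    simp only [Finset.mem_filter, Finset.mem_univ, true_and, Equiv.coe_mulLeft, Equiv.Perm.coe_mul]
    rw [← Finset.image_image, ← hρ, (Finset.image_injective ρ.injective).eq_iff]
  have h2 : (Finset.univ : Finset (Equiv.Perm (Fin n))).card =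
      ∑ T' ∈ Finset.powersetCard S.card (Finset.univ : Finset (Fin n)),
      (Finset.univ.filter fun τ : Equiv.Perm (Fin n) => S.image τ = T').card := by
    refine Finset.card_eq_sum_card_fiberwise fun τ _ => ?_
    simp [Finset.mem_powersetCard, Finset.card_image_of_injective _ τ.injective]
  rw [Finset.sum_congr rfl (fun T' hT => h1 T' (Finset.mem_powersetCard.1 hT).2)] at h2
  have hle : S.card ≤ n := by simpa using S.card_le_univ
  have h3 := Nat.choose_mul_factorial_mul_factorial hle
  have hpos := Nat.choose_pos hle
  simp only [Finset.card_univ, Fintype.card_perm, Fintype.card_fin, Finset.sum_const,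
    Finset.card_powersetCard, smul_eq_mul] at h2
  refine Nat.eq_of_mul_eq_mul_left hpos ?_
  rw [← h2, ← h3]; ring

theorem sigmaT_insert {n : ℕ} (q : Fin n → Fin n → ℂ) (S : Finset (Fin n)) (x : Fin n)
    (hx : x ∉ S) : sigmaT q (insert x S) =
      ∏ y ∈ S, (q x y * q y x * ∏ z ∈ S.erase y, q y z) := by
  have h : ∀ T : Finset (Fin n), sigmaT q T = ∏ y ∈ T, ∏ z ∈ T.erase y, q y z := by
    intro T
    unfold sigmaT
    rw [Finset.prod_filter, Finset.prod_product]
    refine Finset.prod_congr rfl fun y _ => ?_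
    rw [← Finset.prod_filter]
    refine Finset.prod_congr ?_ fun _ _ => rfl
    ext z
    simp [and_comm, eq_comm]
  rw [h, Finset.prod_insert hx, Finset.erase_insert hx]
  rw [← Finset.prod_mul_distrib]
  refine Finset.prod_congr rfl fun y hy => ?_
  have hne : x ≠ y := by rintro rfl; exact hx hy
  rw [Finset.erase_insert_of_ne hne, Finset.prod_insert (by simp [hx]), mul_assoc]

section cyc
variable {n : ℕ} {a b : Fin n} {g : Equiv.Perm (Fin n)}

theorem tc_val (hab : a ≤ b) (hg : IsTCycle a b g) (i : Fin n) :
    (g i : ℕ) = if (a : ℕ) ≤ i ∧ (i : ℕ) < b then (i : ℕ) + 1 else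
      if (i : ℕ) = b then (a : ℕ) else i := by
  obtain ⟨h1, h2, h3⟩ := hg
  split_ifs with h h'
  · exact h1 i h.1 h.2
  · have : i = b := Fin.ext h'
    rw [this, h2]
  · rw [h3]
    rw [Fin.le_def, Fin.le_def]
    omega

theorem tc_invSet (hab : a ≤ b) (hg : IsTCycle a b g) :
    invSet g = (Finset.Ico a b).image fun i => (i, b) := by
  ext ⟨i, j⟩
  have hi := tc_val hab hg i
  have hj := tc_val hab hg j
  simp only [invSet, Finset.mem_filter, Finset.mem_univ, true_and, Finset.mem_image, Finset.mem_Ico,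
    Prod.mk.injEq, Fin.lt_def, Fin.le_def] at hab ⊢
  constructor
  · rintro ⟨h1, h2⟩
    refine ⟨i, ?_, rfl, ?_⟩
    · rw [hi, hj] at h2; split_ifs at h2 <;> omega
    · apply Fin.ext
      rw [hi, hj] at h2; split_ifs at h2 <;> omega
  · rintro ⟨i, h1, rfl, rfl⟩
    refine ⟨h1.2, ?_⟩
    rw [hi, hj]; split_ifs <;> omega

theorem tc_pow_a (hab : a ≤ b) (hg : IsTCycle a b g) (j : ℕ) (hj : (a : ℕ) + j ≤ b) :
    ((g ^ j) a : ℕ) = a + j := by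
  induction j with
  | zero => simp
  | succ j ih =>
    rw [pow_succ', Equiv.Perm.mul_apply, tc_val hab hg, ih (by omega)]
    rw [if_pos (by omega)]; omega

theorem tc_pow_b (hab : a ≤ b) (hg : IsTCycle a b g) (j : ℕ) (hj : (a : ℕ) + j ≤ b) :
    ((g⁻¹ ^ j) b : ℕ) = b - j := by
  have h1 := tc_pow_a hab hg (b - a - j) (by omega)
  have h2 := tc_pow_a hab hg (b - a) (by rw [Fin.le_def] at hab; omega)
  have h3 : (g ^ ((b : ℕ) - a)) a = b := Fin.ext (by rw [h2]; rw [Fin.le_def] at hab; omega)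
  have h4 : (g⁻¹ ^ j) b = (g ^ ((b : ℕ) - a - j)) a := by
    rw [inv_pow, Equiv.Perm.inv_eq_iff_eq, ← Equiv.Perm.mul_apply, ← pow_add]
    rw [show j + ((b : ℕ) - a - j) = (b : ℕ) - a by omega, h3]
  rw [h4, h1]; omega

theorem tc_pow_one (hab : a ≤ b) (hg : IsTCycle a b g) : g ^ ((b : ℕ) - a + 1) = 1 := by
  have hab' := Fin.le_def.1 hab
  have h2 := tc_pow_a hab hg (b - a) (by omega)
  have h3 : (g ^ ((b : ℕ) - a)) a = b := Fin.ext (by rw [h2]; omega)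
  have h4 : (g ^ ((b : ℕ) - a + 1)) a = a := by
    rw [pow_succ', Equiv.Perm.mul_apply, h3, hg.2.1]
  ext i
  by_cases hi : (a : ℕ) ≤ i ∧ (i : ℕ) ≤ b
  · have h5 : (g ^ ((i : ℕ) - a)) a = i := Fin.ext (by
      rw [tc_pow_a hab hg _ (by omega)]; omega)
    conv_lhs => rw [← h5]
    rw [← Equiv.Perm.mul_apply, ← pow_add, add_comm, pow_add, Equiv.Perm.mul_apply, h4, h5]
    rfl
  · have h5 : g i = i := hg.2.2 i (by rw [Fin.le_def, Fin.le_def]; exact hi)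
    rw [Equiv.Perm.pow_apply_eq_self_of_apply_eq_self h5]; rfl

theorem tc_image (hab : a ≤ b) (hg : IsTCycle a b g) :
    (Finset.Icc a b).image g = Finset.Icc a b := by
  apply Finset.eq_of_subset_of_card_le
  · intro x hx
    obtain ⟨y, hy, rfl⟩ := Finset.mem_image.1 hx
    have := tc_val hab hg y
    simp only [Finset.mem_Icc, Fin.le_def] at hy ⊢ hab
    rw [this]; split_ifs <;> omega
  · rw [Finset.card_image_of_injective _ g.injective]

theorem tc_image_inv (hab : a ≤ b) (hg : IsTCycle a b g) (τ : Equiv.Perm (Fin n)) :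
    (Finset.Icc a b).image (τ * g⁻¹ : Equiv.Perm (Fin n)) = (Finset.Icc a b).image τ := by
  conv_lhs => rw [← tc_image hab hg]
  rw [Finset.image_image]
  congr 1
  ext i
  simp

end cyc

theorem det_factor {n : ℕ} (q : Fin n → Fin n → ℂ) {k a b : Fin n} {g : Equiv.Perm (Fin n)}
    (hka : (a : ℕ) = k + 1) (hfs : finSucc k = a) (hab : a ≤ b) (hg : IsTCycle a b g) :
    ((1 : PermMatrix n) - Dmat n q k * twistMat n q g).det =
      ∏ T ∈ Finset.powersetCard ((b : ℕ) - k + 1) (Finset.univ : Finset (Fin n)),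
        (1 - sigmaT q T) ^ (Nat.factorial ((b : ℕ) - k + 1 - 2) * ((b : ℕ) - k + 1) *
          Nat.factorial (n - ((b : ℕ) - k + 1))) := by
  have hab' := Fin.le_def.1 hab
  have hne : ∀ τ : Equiv.Perm (Fin n), ((Finset.Icc a b).image τ).Nonempty := fun τ =>
    Finset.Nonempty.image ⟨a, Finset.mem_Icc.2 ⟨le_rfl, hab⟩⟩ _
  let p : Equiv.Perm (Fin n) → Fin n := fun τ => τ⁻¹ (((Finset.Icc a b).image τ).max' (hne τ))
  have hpS : ∀ τ, (a : ℕ) ≤ p τ ∧ (p τ : ℕ) ≤ b := by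
    intro τ
    obtain ⟨y, hy, hy2⟩ := Finset.mem_image.1 (Finset.max'_mem _ (hne τ))
    have : p τ = y := by
      change τ⁻¹ _ = y
      rw [← hy2]; simp
    rw [this]
    have h3 := Finset.mem_Icc.1 hy
    exact ⟨h3.1, h3.2⟩
  have hpφ : ∀ τ, p (τ * g⁻¹) = g (p τ) := by
    intro τ
    change (τ * g⁻¹)⁻¹ _ = g (τ⁻¹ _)
    simp only [tc_image_inv hab hg τ]
    simp
  let φ : Equiv.Perm (Equiv.Perm (Fin n)) := Equiv.mulRight g⁻¹
  have hφ : ∀ τ, φ τ = τ * g⁻¹ := fun τ => rfl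
  have hφj : ∀ (j : ℕ) τ, (φ ^ j) τ = τ * g⁻¹ ^ j := by
    intro j τ
    simp only [φ, Equiv.pow_mulRight, Equiv.coe_mulRight]
  let c : Equiv.Perm (Fin n) → ℕ := fun τ => (p τ : ℕ) - a
  have hc : ∀ τ, c τ < (b : ℕ) - a + 1 := by
    intro τ
    have := hpS τ
    change (p τ : ℕ) - a < _
    omega
  have hcφ : ∀ τ, c (φ τ) = if c τ + 1 = (b : ℕ) - a + 1 then 0 else c τ + 1 := by
    intro τ
    have h1 := hpS τ
    have h2 := tc_val hab hg (p τ)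
    change (p (τ * g⁻¹) : ℕ) - a = if (p τ : ℕ) - a + 1 = (b : ℕ) - a + 1 then 0
      else (p τ : ℕ) - a + 1
    rw [hpφ, h2]
    split_ifs <;> omega
  have hga : g k = k := hg.2.2 k (by rw [Fin.le_def, Fin.le_def]; omega)
  have hgk : g⁻¹ k = k := by rw [Equiv.Perm.inv_eq_iff_eq, hga]
  have hgb : g⁻¹ a = b := by rw [Equiv.Perm.inv_eq_iff_eq, hg.2.1]
  have hkS : ∀ τ : Equiv.Perm (Fin n), τ k ∉ (Finset.Icc a b).image τ := by
    intro τ h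
    obtain ⟨y, hy, hy2⟩ := Finset.mem_image.1 h
    rw [τ.injective hy2] at hy
    simp only [Finset.mem_Icc, Fin.le_def] at hy
    omega
  have hins : ∀ τ : Equiv.Perm (Fin n),
      (Finset.Icc k b).image τ = insert (τ k) ((Finset.Icc a b).image τ) := by
    intro τ
    rw [← Finset.image_insert]
    congr 1
    ext i
    simp only [Finset.mem_insert, Finset.mem_Icc, Fin.le_def, Fin.ext_iff]
    omega
  let F : Finset (Fin n) → Fin n → Fin n → ℂ := fun S x y =>
    q x y * q y x * ∏ z ∈ S.erase y, q y z
  have hA : ∀ σ τ, (Dmat n q k * twistMat n q g) σ τ =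
      if σ = φ τ then F ((Finset.Icc a b).image τ) (τ k) (τ b) else 0 := by
    intro σ τ
    rw [Dmat, Matrix.diagonal_mul, twistMat, hφ]
    by_cases h : σ = τ * g⁻¹
    · rw [if_pos h, if_pos h, h, hfs, Equiv.Perm.mul_apply, Equiv.Perm.mul_apply, hgk, hgb,
        tc_invSet hab hg, Finset.prod_image (by intro i _ j _ h; exact (Prod.mk.inj h).1)]
      change _ = _ * _
      congr 1
      rw [← Finset.image_erase τ.injective, Finset.Icc_erase_right,
        Finset.prod_image (fun i _ j _ h => τ.injective h)]
    · rw [if_neg h, if_neg h, mul_zero]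
  have hinvk : ∀ j : ℕ, (g⁻¹ ^ j) k = k := fun j =>
    Equiv.Perm.pow_apply_eq_self_of_apply_eq_self hgk j
  have hinvS : ∀ (j : ℕ) (τ : Equiv.Perm (Fin n)),
      (Finset.Icc a b).image (τ * g⁻¹ ^ j : Equiv.Perm (Fin n)) = (Finset.Icc a b).image τ := by
    intro j τ
    induction j with
    | zero => simp
    | succ j ih => rw [pow_succ, ← mul_assoc, tc_image_inv hab hg, ih]
  rw [det_one_sub_mono φ (fun τ => F ((Finset.Icc a b).image τ) (τ k) (τ b)) ((b : ℕ) - a + 1)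
    (by simp only [φ, Equiv.pow_mulRight, inv_pow, tc_pow_one hab hg]; ext; simp) c hc hcφ _ hA]
  have hprod : ∀ τ : Equiv.Perm (Fin n), ∏ j ∈ Finset.range ((b : ℕ) - a + 1),
      F ((Finset.Icc a b).image ((φ ^ j) τ)) (((φ ^ j) τ) k) (((φ ^ j) τ) b) =
      sigmaT q ((Finset.Icc k b).image τ) := by
    intro τ
    simp only [hφj, hinvS, Equiv.Perm.mul_apply, hinvk]
    rw [hins, sigmaT_insert q _ _ (hkS τ)]
    refine Finset.prod_bij (fun j _ => τ ((g⁻¹ ^ j) b)) ?_ ?_ ?_ ?_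
    · intro j hj
      have hj' := Finset.mem_range.1 hj
      have := tc_pow_b hab hg j (by omega)
      refine Finset.mem_image_of_mem _ ?_
      rw [Finset.mem_Icc, Fin.le_def, Fin.le_def]
      omega
    · intro i hi j hj h
      have hi' := Finset.mem_range.1 hi
      have hj' := Finset.mem_range.1 hj
      have h1 := tc_pow_b hab hg j (by omega)
      have h2 := tc_pow_b hab hg i (by omega)
      have h3 := congrArg Fin.val (τ.injective h)
      omega
    · intro y hy
      obtain ⟨i, hi, rfl⟩ := Finset.mem_image.1 hy
      rw [Finset.mem_Icc, Fin.le_def, Fin.le_def] at hi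
      refine ⟨(b : ℕ) - i, Finset.mem_range.2 (by omega), ?_⟩
      congr 1
      apply Fin.ext
      rw [tc_pow_b hab hg _ (by omega)]
      omega
    · intro j _
      rfl
  simp only [hprod]
  have hcard : (Finset.Icc k b).card = (b : ℕ) - k + 1 := by
    rw [Fin.card_Icc]; omega
  rw [← Finset.prod_fiberwise_of_maps_to
    (t := Finset.powersetCard ((b : ℕ) - k + 1) (Finset.univ : Finset (Fin n)))
    (g := fun τ : Equiv.Perm (Fin n) => (Finset.Icc k b).image τ) (by
      intro τ _
      rw [Finset.mem_powersetCard, Finset.card_image_of_injective _ τ.injective]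
      exact ⟨Finset.subset_univ _, hcard⟩)]
  refine Finset.prod_congr rfl fun T hT => ?_
  have hT' := (Finset.mem_powersetCard.1 hT).2
  rw [Finset.prod_congr rfl (g := fun _ => 1 - sigmaT q T) (by
    intro τ hτ
    rw [(Finset.mem_filter.1 hτ).2]), Finset.prod_const]
  congr 1
  have h1 := card_level φ ((b : ℕ) - a + 1) c hc hcφ
    (fun τ => (Finset.Icc k b).image τ = T) (by
      intro τ
      rw [hins, hins, hφ, tc_image_inv hab hg, Equiv.Perm.mul_apply, hgk])
  rw [card_image_eq _ _ (hT'.trans hcard.symm), hcard] at h1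
  rw [Finset.filter_filter]
  simp only [and_comm (a := c _ = 0)]
  refine Nat.eq_of_mul_eq_mul_left (show 0 < (b : ℕ) - a + 1 by omega) ?_
  rw [h1]
  obtain ⟨s, hs⟩ : ∃ s, (b : ℕ) = a + s := ⟨b - a, by omega⟩
  rw [show (b : ℕ) - a + 1 = s + 1 by omega, show (b : ℕ) - k + 1 = s + 2 by omega,
    Nat.factorial_succ (s + 1), Nat.factorial_succ s]
  simp only [Nat.add_sub_cancel]
  ring

theorem twistMat_one {n : ℕ} (q : Fin n → Fin n → ℂ) : twistMat n q 1 = 1 := by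
  ext σ τ
  have : invSet (1 : Equiv.Perm (Fin n)) = ∅ := by
    ext ⟨i, j⟩
    simp only [Finset.notMem_empty, iff_false]
    intro h
    have h2 := (Finset.mem_filter.1 h).2
    exact lt_asymm h2.1 h2.2
  rw [twistMat, this, Matrix.one_apply]
  simp

/-- For `1 ≤ k ≤ n−1`, the determinant of the ordered product
`D_{Q,n−k+1} = (I − D_k·M_q(t_{n,k+1})) ⋯ (I − D_k·M_q(t_{k+2,k+1})) · (I − D_k)`
factors as `∏_{m=2}^{n−k+1} ∏_T (1 − σ_T)^{(m−2)!·m·(n−m)!}`, the inner product being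
over all subsets `T ⊆ Fin n` of cardinality `m`. -/
theorem det_D_factorization (n : ℕ) (hn : 1 ≤ n) (q : Fin n → Fin n → ℂ)
    (t : Fin n → Fin n → Equiv.Perm (Fin n))
    (ht : ∀ a b : Fin n, a ≤ b → IsTCycle a b (t b a))
    (k : Fin n) (hk : (k : ℕ) + 1 < n) :
    (((((List.finRange n).filter fun m => decide (finSucc k < m)).reverse.map
        fun m => (1 : PermMatrix n) - Dmat n q k * twistMat n q (t m (finSucc k))).prod) *
      ((1 : PermMatrix n) - Dmat n q k)).det =
      ∏ m ∈ Finset.Icc 2 (n - (k : ℕ)),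
        ∏ T ∈ Finset.powersetCard m (Finset.univ : Finset (Fin n)),
          (1 - sigmaT q T) ^ (Nat.factorial (m - 2) * m * Nat.factorial (n - m)) := by
  have hfv : ((finSucc k : Fin n) : ℕ) = k + 1 := Nat.mod_eq_of_lt hk
  have hone : t (finSucc k) (finSucc k) = 1 := by
    have h := ht (finSucc k) (finSucc k) le_rfl
    ext i
    rw [tc_val le_rfl h i]
    simp only [Equiv.Perm.one_apply]
    split_ifs <;> omega
  have h0 : (1 : PermMatrix n) - Dmat n q k =
      1 - Dmat n q k * twistMat n q (t (finSucc k) (finSucc k)) := by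
    rw [hone, twistMat_one, mul_one]
  have hlist : ∀ (l : List (Fin n)) (f : Fin n → PermMatrix n),
      (l.map f).prod.det = (l.map fun m => (f m).det).prod := by
    intro l f
    induction l with
    | nil => simp
    | cons x l ih => simp [ih]
  rw [Matrix.det_mul, hlist, List.map_reverse, List.prod_reverse]
  have hnd : ((List.finRange n).filter fun m => decide (finSucc k < m)).Nodup :=
    (List.nodup_finRange n).filter _
  rw [← List.prod_toFinset _ hnd, h0, mul_comm, ← Finset.prod_insert
    (f := fun m => (1 - Dmat n q k * twistMat n q (t m (finSucc k))).det) (by simp)]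
  have hset : insert (finSucc k)
      ((List.finRange n).filter fun m => decide (finSucc k < m)).toFinset =
      Finset.Ici (finSucc k) := by
    ext i
    simp only [Finset.mem_insert, List.mem_toFinset, List.mem_filter, List.mem_finRange, true_and,
      decide_eq_true_eq, Finset.mem_Ici]
    rw [le_iff_eq_or_lt, eq_comm]
  rw [hset]
  rw [Finset.prod_congr rfl (fun b hb => det_factor q hfv rfl (Finset.mem_Ici.1 hb)
    (ht _ _ (Finset.mem_Ici.1 hb)))]
  refine Finset.prod_bij (fun b _ => (b : ℕ) - k + 1) ?_ ?_ ?_ ?_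
  · intro b hb
    have := Fin.le_def.1 (Finset.mem_Ici.1 hb)
    rw [Finset.mem_Icc]
    omega
  · intro i hi j hj h
    have h1 := Fin.le_def.1 (Finset.mem_Ici.1 hi)
    have h2 := Fin.le_def.1 (Finset.mem_Ici.1 hj)
    apply Fin.ext
    omega
  · intro m hm
    rw [Finset.mem_Icc] at hm
    refine ⟨⟨m + k - 1, by omega⟩, ?_, ?_⟩
    · rw [Finset.mem_Ici, Fin.le_def, hfv]
      change _ ≤ m + k - 1
      omega
    · change m + k - 1 - k + 1 = m
      omega
  · intro b _
    rfl
end
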